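/- Let m ≥ 2. The function R ↦ μ_1(B_R) is strictly decreasing on (0, ∞): for all 0 < a < b one has μ_1(B_b) < μ_1(B_a). -/

import Mathlib

open MeasureTheory Real Set

noncomputable section

/-- A trial function for the radial variational problem on the ball of radius
`R`: `φ ∈ C¹([0,R])` (with derivative `φ'`), `φ(0) = 0`, `φ'(R) = 0`, and `φ`
not identically zero on `[0,R]`. -/
def IsRadialTrial (R : ℝ) (φ φ' : ℝ → ℝ) : Prop :=
  (∀ r ∈ Icc (0 : ℝ) R, HasDerivWithinAt φ (φ' r) (Icc (0 : ℝ) R) r) ∧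
  ContinuousOn φ' (Icc (0 : ℝ) R) ∧
  φ 0 = 0 ∧ φ' R = 0 ∧ ∃ r ∈ Icc (0 : ℝ) R, φ r ≠ 0

/-- The first nonzero Neumann eigenvalue `μ₁(B_R)` of the Ornstein–Uhlenbeck
operator on the origin-centered ball `B_R ⊆ ℝ^m`, via its radial variational
characterization:
`μ₁(B_R) = inf { ∫₀^R (φ'² + (m-1)φ²/r²) e^{-r²/2} r^{m-1} dr
              / ∫₀^R φ² e^{-r²/2} r^{m-1} dr }`
over `φ ∈ C¹([0,R])` with `φ(0) = 0`, `φ'(R) = 0`, `φ ≢ 0`. -/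
def mu1Ball (m : ℕ) (R : ℝ) : ℝ :=
  sInf { q : ℝ | ∃ φ φ' : ℝ → ℝ, IsRadialTrial R φ φ' ∧
    q = (∫ r in Ioo (0 : ℝ) R,
          (φ' r ^ 2 + ((m : ℝ) - 1) * φ r ^ 2 / r ^ 2) *
            Real.exp (-r ^ 2 / 2) * r ^ (m - 1)) /
        (∫ r in Ioo (0 : ℝ) R,
          φ r ^ 2 * Real.exp (-r ^ 2 / 2) * r ^ (m - 1)) }

/-!
The radial weight is `w = e^{-V} r^n` with `V` convex and nondecreasing on `[0, ∞)` (here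
`V r = r² / 2`, `n = m - 1`). The radius `p r = (n + 1 times the w-mass of [0, r]) ^ (1 / (n + 1))`
satisfies `w = p ^ n * p'`, and the hypotheses on `V` make `p` concave. Given `a < b`, put
`c = p a / p b < 1` and let `s` be the map with `p (s r) = c * p r`. Then `s` carries `[0, b]` onto
`[0, a]` and multiplies `w`-masses by the constant `c ^ (n + 1)`, and concavity of `p` gives
`s' ≤ c` and `s r ≤ c * r`. Hence `φ ↦ φ ∘ s` turns a trial function on `[0, a]` into one on
`[0, b]` whose Rayleigh quotient is smaller by the factor `c ^ 2`, uniformly in `φ`. As the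
eigenvalue is positive, the uniform factor yields the strict inequality without a minimizer.
-/

section Trial

variable {R k : ℝ} {w φ φ' : ℝ → ℝ}

/-- The squared `L²` norm of `φ` on `(0, R)` for the radial weight `w`, the denominator of the
Rayleigh quotient. -/
def radialMass (w : ℝ → ℝ) (R : ℝ) (φ : ℝ → ℝ) : ℝ :=
  ∫ r in Ioo (0 : ℝ) R, φ r ^ 2 * w r

/-- The Dirichlet energy of `φ`, with derivative `φ'`, on `(0, R)` for the radial weight `w`, the
numerator of the Rayleigh quotient. The coefficient `k` of the centrifugal term is a free
parameter; it is `m - 1` for the first spherical harmonics in `ℝ^m`. -/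
def radialEnergy (k : ℝ) (w : ℝ → ℝ) (R : ℝ) (φ φ' : ℝ → ℝ) : ℝ :=
  ∫ r in Ioo (0 : ℝ) R, (φ' r ^ 2 + k * φ r ^ 2 / r ^ 2) * w r

/-- The infimum of the Rayleigh quotients `radialEnergy / radialMass` over the trial functions on
`[0, R]`; it generalizes `mu1Ball` to arbitrary weights and centrifugal coefficients. -/
def radialEigenvalue (k : ℝ) (w : ℝ → ℝ) (R : ℝ) : ℝ :=
  sInf {q : ℝ | ∃ φ φ' : ℝ → ℝ, IsRadialTrial R φ φ' ∧
    q = radialEnergy k w R φ φ' / radialMass w R φ}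

lemma isRadialTrial_parabola (hR : 0 < R) :
    IsRadialTrial R (fun r => 2 * R * r - r ^ 2) (fun r => 2 * R - 2 * r) := by
  refine ⟨fun r _ => ?_, by fun_prop, by simp, by simp, R, ⟨hR.le, le_rfl⟩, ?_⟩
  · simpa using
      (((hasDerivAt_id r).const_mul (2 * R)).fun_sub (hasDerivAt_pow 2 r)).hasDerivWithinAt
  · have : 2 * R * R - R ^ 2 = R ^ 2 := by ring
    simpa only [this] using (pow_pos hR 2).ne'

lemma IsRadialTrial.continuousOn (h : IsRadialTrial R φ φ') : ContinuousOn φ (Icc 0 R) :=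
  fun r hr => (h.1 r hr).continuousWithinAt

lemma IsRadialTrial.exists_deriv_bound (h : IsRadialTrial R φ φ') :
    ∃ C, ∀ r ∈ Icc 0 R, |φ' r| ≤ C ∧ |φ r| ≤ C * r := by
  obtain ⟨C, hC⟩ := isCompact_Icc.exists_bound_of_continuousOn h.2.1
  refine ⟨C, fun r hr => ⟨hC r hr, ?_⟩⟩
  have hmv := (convex_Icc 0 R).norm_image_sub_le_of_norm_hasDerivWithin_le h.1 hC
    ⟨le_rfl, hr.1.trans hr.2⟩ hr
  simpa only [h.2.2.1, sub_zero, norm_eq_abs, abs_of_nonneg hr.1] using hmv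

lemma IsRadialTrial.radialMass_pos (h : IsRadialTrial R φ φ') (hR : 0 < R)
    (hw : ContinuousOn w (Icc 0 R)) (hw_pos : ∀ r ∈ Ioc 0 R, 0 < w r) :
    0 < radialMass w R φ := by
  rw [radialMass, ← integral_Ioc_eq_integral_Ioo, ← intervalIntegral.integral_of_le hR.le]
  obtain ⟨r, hr, hφr⟩ := h.2.2.2.2
  have hr_ne : r ≠ 0 := fun hr0 => hφr (hr0 ▸ h.2.2.1)
  have hr_pos : 0 < r := lt_of_le_of_ne hr.1 hr_ne.symm
  exact intervalIntegral.integral_pos hR ((h.continuousOn.pow 2).mul hw)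
    (fun x hx => mul_nonneg (sq_nonneg _) (hw_pos x hx).le)
    ⟨r, hr, mul_pos (by positivity) (hw_pos r ⟨hr_pos, hr.2⟩)⟩

lemma IsRadialTrial.integrableOn_mass (h : IsRadialTrial R φ φ')
    (hw : ContinuousOn w (Icc 0 R)) : IntegrableOn (fun r => φ r ^ 2 * w r) (Ioo 0 R) :=
  ((h.continuousOn.pow 2).mul hw).integrableOn_Icc.mono_set Ioo_subset_Icc_self

lemma IsRadialTrial.integrableOn_energy (h : IsRadialTrial R φ φ')
    (hw : ContinuousOn w (Icc 0 R)) (k : ℝ) :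
    IntegrableOn (fun r => (φ' r ^ 2 + k * φ r ^ 2 / r ^ 2) * w r) (Ioo 0 R) := by
  obtain ⟨C, hC⟩ := h.exists_deriv_bound
  have hφ := h.continuousOn.mono Ioo_subset_Icc_self
  have hφ' := h.2.1.mono Ioo_subset_Icc_self
  have hcont : ContinuousOn (fun r => φ' r ^ 2 + k * φ r ^ 2 / r ^ 2) (Ioo 0 R) :=
    (hφ'.pow 2).add ((continuousOn_const.mul (hφ.pow 2)).div (by fun_prop)
      fun r hr => (pow_pos hr.1 2).ne')
  refine (hw.integrableOn_Icc.mono_set Ioo_subset_Icc_self).bdd_mul (c := C ^ 2 + |k| * C ^ 2)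
    (hcont.aestronglyMeasurable measurableSet_Ioo) ?_
  filter_upwards [ae_restrict_mem measurableSet_Ioo] with r hr
  obtain ⟨hφ'r, hφr⟩ := hC r (Ioo_subset_Icc_self hr)
  have hr0 : 0 < r := hr.1
  calc ‖φ' r ^ 2 + k * φ r ^ 2 / r ^ 2‖
      ≤ |φ' r| ^ 2 + |k| * |φ r| ^ 2 / r ^ 2 := by
        refine (norm_add_le _ _).trans_eq ?_
        simp only [norm_eq_abs, abs_div, abs_mul, abs_pow, abs_of_pos hr0]
    _ ≤ C ^ 2 + |k| * (C * r) ^ 2 / r ^ 2 := by gcongr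
    _ = C ^ 2 + |k| * C ^ 2 := by field_simp

lemma IsRadialTrial.mul_radialMass_le_radialEnergy (h : IsRadialTrial R φ φ')
    (hw : ContinuousOn w (Icc 0 R)) (hw_nonneg : ∀ r ∈ Ioo 0 R, 0 ≤ w r) (hk : 0 ≤ k) :
    k / R ^ 2 * radialMass w R φ ≤ radialEnergy k w R φ φ' := by
  rw [radialMass, radialEnergy, ← integral_const_mul]
  refine setIntegral_mono_on ((h.integrableOn_mass hw).const_mul _) (h.integrableOn_energy hw k)
    measurableSet_Ioo fun r hr => ?_
  have hr0 : 0 < r := hr.1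
  have hw0 := hw_nonneg r hr
  calc k / R ^ 2 * (φ r ^ 2 * w r) = (0 + k * φ r ^ 2 / R ^ 2) * w r := by ring
    _ ≤ (φ' r ^ 2 + k * φ r ^ 2 / r ^ 2) * w r := by
      gcongr
      · positivity
      · exact hr.2.le

lemma radialEigenvalue_congr {w₁ w₂ : ℝ → ℝ} (h : EqOn w₁ w₂ (Ioo 0 R)) :
    radialEigenvalue k w₁ R = radialEigenvalue k w₂ R := by
  have hmass (φ : ℝ → ℝ) : radialMass w₁ R φ = radialMass w₂ R φ :=
    setIntegral_congr_fun measurableSet_Ioo fun r hr => by simp only [h hr]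
  have henergy (φ φ' : ℝ → ℝ) : radialEnergy k w₁ R φ φ' = radialEnergy k w₂ R φ φ' :=
    setIntegral_congr_fun measurableSet_Ioo fun r hr => by simp only [h hr]
  simp only [radialEigenvalue, hmass, henergy]

lemma IsRadialTrial.radialEigenvalue_le (h : IsRadialTrial R φ φ')
    (hw_nonneg : ∀ r ∈ Ioo 0 R, 0 ≤ w r) (hk : 0 ≤ k) :
    radialEigenvalue k w R ≤ radialEnergy k w R φ φ' / radialMass w R φ := by
  refine csInf_le ⟨0, ?_⟩ ⟨φ, φ', h, rfl⟩
  rintro q ⟨ψ, ψ', -, rfl⟩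
  refine div_nonneg (setIntegral_nonneg measurableSet_Ioo fun r hr => ?_)
    (setIntegral_nonneg measurableSet_Ioo fun r hr => ?_)
  · exact mul_nonneg (by positivity) (hw_nonneg r hr)
  · exact mul_nonneg (sq_nonneg _) (hw_nonneg r hr)

lemma le_radialEigenvalue (hR : 0 < R) {x : ℝ}
    (h : ∀ φ φ', IsRadialTrial R φ φ' → x ≤ radialEnergy k w R φ φ' / radialMass w R φ) :
    x ≤ radialEigenvalue k w R := by
  refine le_csInf ⟨_, _, _, isRadialTrial_parabola hR, rfl⟩ ?_
  rintro q ⟨φ, φ', hφ, rfl⟩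
  exact h φ φ' hφ

lemma radialEigenvalue_pos (hR : 0 < R) (hw : ContinuousOn w (Icc 0 R))
    (hw_pos : ∀ r ∈ Ioc 0 R, 0 < w r) (hk : 0 < k) : 0 < radialEigenvalue k w R := by
  refine (div_pos hk (pow_pos hR 2)).trans_le (le_radialEigenvalue hR fun φ φ' h => ?_)
  rw [le_div_iff₀ (h.radialMass_pos hR hw hw_pos)]
  exact h.mul_radialMass_le_radialEnergy hw (fun r hr => (hw_pos r (Ioo_subset_Ioc_self hr)).le)
    hk.le

end Trial

/-- A concave change of radius: a `C¹` function `p` on `ℝ` with `p 0 = 0` and positive derivative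
`p'`, nonincreasing on `[0, ∞)`. It is used to present radial weights in the form `p ^ n * p'`. -/
structure IsConcaveGauge (p p' : ℝ → ℝ) : Prop where
  hasDerivAt : ∀ r, HasDerivAt p (p' r) r
  continuous_deriv : Continuous p'
  deriv_pos : ∀ r, 0 < p' r
  antitoneOn_deriv : AntitoneOn p' (Ici 0)
  map_zero : p 0 = 0

/-- The map `s` with `p (s r) = c * p r`, for an injective `p`; `Function.invFun` returns a junk
value where `c * p r` is not in the range of `p`. -/
def rescale (p : ℝ → ℝ) (c r : ℝ) : ℝ :=
  Function.invFun p (c * p r)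

/-- The derivative of `rescale p c` when `p'` is the derivative of `p`. -/
def rescaleDeriv (p p' : ℝ → ℝ) (c r : ℝ) : ℝ :=
  c * p' r / p' (rescale p c r)

namespace IsConcaveGauge

variable {p p' : ℝ → ℝ} {c r : ℝ}

lemma strictMono (hp : IsConcaveGauge p p') : StrictMono p :=
  strictMono_of_hasDerivAt_pos hp.hasDerivAt hp.deriv_pos

lemma continuous (hp : IsConcaveGauge p p') : Continuous p :=
  continuous_iff_continuousAt.2 fun r => (hp.hasDerivAt r).continuousAt

lemma pos (hp : IsConcaveGauge p p') (hr : 0 < r) : 0 < p r :=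
  hp.map_zero ▸ hp.strictMono hr

lemma isOpenEmbedding (hp : IsConcaveGauge p p') : Topology.IsOpenEmbedding p :=
  .of_continuous_injective_isOpenMap hp.continuous hp.strictMono.injective <|
    isOpenMap_of_hasStrictDerivAt
      (fun _ => hasStrictDerivAt_of_hasDerivAt_of_continuousAt (.of_forall hp.hasDerivAt)
        hp.continuous_deriv.continuousAt)
      fun _ => (hp.deriv_pos _).ne'

lemma hasDerivAt_invFun (hp : IsConcaveGauge p p') (r : ℝ) :
    HasDerivAt (Function.invFun p) (p' r)⁻¹ (p r) := by
  have hleft : Function.LeftInverse (Function.invFun p) p :=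
    Function.leftInverse_invFun hp.strictMono.injective
  refine HasDerivAt.of_local_left_inverse (f := p) ?_ ?_ (hp.deriv_pos r).ne' ?_
  · rw [← hp.isOpenEmbedding.continuousAt_iff, hleft.comp_eq_id]
    exact continuousAt_id
  · rw [hleft r]
    exact hp.hasDerivAt r
  · filter_upwards [hp.isOpenEmbedding.isOpen_range.mem_nhds (mem_range_self r)] with y hy
    exact Function.invFun_eq hy

lemma apply_rescale (hp : IsConcaveGauge p p') (hc : c ∈ Icc 0 1) (r : ℝ) :
    p (rescale p c r) = c * p r := by
  have hconvex : Convex ℝ (range p) := (isPreconnected_range hp.continuous).ordConnected.convex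
  exact Function.invFun_eq <|
    hconvex.smul_mem_of_zero_mem ⟨0, hp.map_zero⟩ (mem_range_self r) hc

lemma rescale_zero (hp : IsConcaveGauge p p') (hc : c ∈ Icc 0 1) : rescale p c 0 = 0 :=
  hp.strictMono.injective <| by rw [hp.apply_rescale hc, hp.map_zero, mul_zero]

lemma rescale_eq (hp : IsConcaveGauge p p') {a b : ℝ} (hb : 0 < b) :
    rescale p (p a / p b) b = a := by
  rw [rescale, div_mul_cancel₀ _ (hp.pos hb).ne']
  exact Function.leftInverse_invFun hp.strictMono.injective a

lemma hasDerivAt_rescale (hp : IsConcaveGauge p p') (hc : c ∈ Icc 0 1) (r : ℝ) :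
    HasDerivAt (rescale p c) (rescaleDeriv p p' c r) r := by
  have hinv := hp.hasDerivAt_invFun (rescale p c r)
  rw [hp.apply_rescale hc] at hinv
  rw [rescaleDeriv, div_eq_inv_mul]
  exact hinv.comp r ((hp.hasDerivAt r).const_mul c)

lemma continuous_rescale (hp : IsConcaveGauge p p') (hc : c ∈ Icc 0 1) :
    Continuous (rescale p c) :=
  continuous_iff_continuousAt.2 fun r => (hp.hasDerivAt_rescale hc r).continuousAt

lemma continuous_rescaleDeriv (hp : IsConcaveGauge p p') (hc : c ∈ Icc 0 1) :
    Continuous (rescaleDeriv p p' c) :=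
  (continuous_const.mul hp.continuous_deriv).div
    (hp.continuous_deriv.comp (hp.continuous_rescale hc)) fun _ => (hp.deriv_pos _).ne'

lemma rescaleDeriv_pos (hp : IsConcaveGauge p p') (hc : 0 < c) (r : ℝ) :
    0 < rescaleDeriv p p' c r :=
  div_pos (mul_pos hc (hp.deriv_pos r)) (hp.deriv_pos _)

lemma strictMono_rescale (hp : IsConcaveGauge p p') (hc : c ∈ Ioc 0 1) :
    StrictMono (rescale p c) :=
  strictMono_of_hasDerivAt_pos (hp.hasDerivAt_rescale (Ioc_subset_Icc_self hc))
    (hp.rescaleDeriv_pos hc.1)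

lemma rescale_pos (hp : IsConcaveGauge p p') (hc : c ∈ Ioc 0 1) (hr : 0 < r) :
    0 < rescale p c r :=
  hp.rescale_zero (Ioc_subset_Icc_self hc) ▸ hp.strictMono_rescale hc hr

lemma rescale_nonneg (hp : IsConcaveGauge p p') (hc : c ∈ Ioc 0 1) (hr : 0 ≤ r) :
    0 ≤ rescale p c r :=
  hp.rescale_zero (Ioc_subset_Icc_self hc) ▸ (hp.strictMono_rescale hc).monotone hr

lemma rescale_le_self (hp : IsConcaveGauge p p') (hc : c ∈ Icc 0 1) (hr : 0 ≤ r) :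
    rescale p c r ≤ r := by
  rw [← hp.strictMono.le_iff_le, hp.apply_rescale hc]
  exact mul_le_of_le_one_left (hp.map_zero ▸ hp.strictMono.monotone hr) hc.2

lemma rescaleDeriv_le (hp : IsConcaveGauge p p') (hc : c ∈ Ioc 0 1) (hr : 0 ≤ r) :
    rescaleDeriv p p' c r ≤ c := by
  rw [rescaleDeriv, div_le_iff₀ (hp.deriv_pos _)]
  exact mul_le_mul_of_nonneg_left
    (hp.antitoneOn_deriv (hp.rescale_nonneg hc hr) hr
      (hp.rescale_le_self (Ioc_subset_Icc_self hc) hr)) hc.1.le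

lemma rescale_le_mul (hp : IsConcaveGauge p p') (hc : c ∈ Ioc 0 1) (hr : 0 ≤ r) :
    rescale p c r ≤ c * r := by
  have hc' := Ioc_subset_Icc_self hc
  have hderiv := hp.hasDerivAt_rescale hc'
  have hmv := (convex_Ici (0 : ℝ)).image_sub_le_mul_sub_of_deriv_le
    (hp.continuous_rescale hc').continuousOn
    (fun x _ => (hderiv x).differentiableAt.differentiableWithinAt)
    (fun x hx => (hderiv x).deriv.trans_le (hp.rescaleDeriv_le hc (interior_subset hx)))
    0 self_mem_Ici r hr hr
  simpa only [hp.rescale_zero hc', sub_zero] using hmv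

lemma mapsTo_rescale (hp : IsConcaveGauge p p') (hc : c ∈ Ioc 0 1) (R : ℝ) :
    MapsTo (rescale p c) (Icc 0 R) (Icc 0 (rescale p c R)) :=
  fun _ hr => ⟨hp.rescale_nonneg hc hr.1, (hp.strictMono_rescale hc).monotone hr.2⟩

lemma image_rescale_Ioo (hp : IsConcaveGauge p p') (hc : c ∈ Ioc 0 1) {R : ℝ} (hR : 0 ≤ R) :
    rescale p c '' Ioo 0 R = Ioo 0 (rescale p c R) := by
  have hc' := Ioc_subset_Icc_self hc
  apply Subset.antisymm
  · rintro _ ⟨r, hr, rfl⟩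
    exact ⟨hp.rescale_pos hc hr.1, hp.strictMono_rescale hc hr.2⟩
  · simpa only [hp.rescale_zero hc'] using
      intermediate_value_Ioo hR (hp.continuous_rescale hc').continuousOn

lemma pow_mul_deriv_rescale (hp : IsConcaveGauge p p') (hc : c ∈ Icc 0 1) (n : ℕ) (r : ℝ) :
    rescaleDeriv p p' c r * (p (rescale p c r) ^ n * p' (rescale p c r)) =
      c ^ (n + 1) * (p r ^ n * p' r) := by
  have hne : p' (rescale p c r) ≠ 0 := (hp.deriv_pos _).ne'
  rw [hp.apply_rescale hc, rescaleDeriv]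
  field_simp
  ring

lemma abs_rescaleDeriv_smul (hp : IsConcaveGauge p p') (hc : c ∈ Ioc 0 1) (n : ℕ) (x r : ℝ) :
    |rescaleDeriv p p' c r| • (x * (p (rescale p c r) ^ n * p' (rescale p c r))) =
      c ^ (n + 1) * (x * (p r ^ n * p' r)) := by
  rw [abs_of_pos (hp.rescaleDeriv_pos hc.1 r), smul_eq_mul, mul_left_comm,
    hp.pow_mul_deriv_rescale (Ioc_subset_Icc_self hc), mul_left_comm]

lemma integral_rescale (hp : IsConcaveGauge p p') (hc : c ∈ Ioc 0 1) {R : ℝ} (hR : 0 ≤ R)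
    (n : ℕ) (F : ℝ → ℝ) :
    ∫ r in Ioo 0 (rescale p c R), F r * (p r ^ n * p' r) =
      c ^ (n + 1) * ∫ r in Ioo 0 R, F (rescale p c r) * (p r ^ n * p' r) := by
  rw [← hp.image_rescale_Ioo hc hR, integral_image_eq_integral_abs_deriv_smul measurableSet_Ioo
    (fun r _ => (hp.hasDerivAt_rescale (Ioc_subset_Icc_self hc) r).hasDerivWithinAt)
    (hp.strictMono_rescale hc).injective.injOn]
  simp only [hp.abs_rescaleDeriv_smul hc, integral_const_mul]

lemma integrableOn_rescale (hp : IsConcaveGauge p p') (hc : c ∈ Ioc 0 1) {R : ℝ} (hR : 0 ≤ R)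
    (n : ℕ) {F : ℝ → ℝ}
    (hF : IntegrableOn (fun r => F r * (p r ^ n * p' r)) (Ioo 0 (rescale p c R))) :
    IntegrableOn (fun r => F (rescale p c r) * (p r ^ n * p' r)) (Ioo 0 R) := by
  rw [← hp.image_rescale_Ioo hc hR, integrableOn_image_iff_integrableOn_abs_deriv_smul
    measurableSet_Ioo
    (fun r _ => (hp.hasDerivAt_rescale (Ioc_subset_Icc_self hc) r).hasDerivWithinAt)
    (hp.strictMono_rescale hc).injective.injOn] at hF
  simp only [hp.abs_rescaleDeriv_smul hc] at hF
  exact (integrable_const_mul_iff (pow_pos hc.1 _).ne'.isUnit _).1 hF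

lemma isRadialTrial_comp_rescale (hp : IsConcaveGauge p p') (hc : c ∈ Ioc 0 1) {R : ℝ}
    (hR : 0 ≤ R) {φ φ' : ℝ → ℝ} (h : IsRadialTrial (rescale p c R) φ φ') :
    IsRadialTrial R (fun r => φ (rescale p c r))
      (fun r => φ' (rescale p c r) * rescaleDeriv p p' c r) := by
  obtain ⟨hderiv, hcont, hφ_zero, hφ'_right, x, hx, hφx⟩ := h
  have hc' := Ioc_subset_Icc_self hc
  have hs_cont : ContinuousOn (rescale p c) (Icc 0 R) := (hp.continuous_rescale hc').continuousOn
  have hmaps := hp.mapsTo_rescale hc R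
  refine ⟨fun r hr => ?_, ?_, ?_, ?_, ?_⟩
  · exact (hderiv _ (hmaps hr)).comp r (hp.hasDerivAt_rescale hc' r).hasDerivWithinAt hmaps
  · exact (hcont.comp hs_cont hmaps).mul (hp.continuous_rescaleDeriv hc').continuousOn
  · simp only [hp.rescale_zero hc', hφ_zero]
  · simp only [hφ'_right, zero_mul]
  · rw [← hp.rescale_zero hc'] at hx
    obtain ⟨r, hr, rfl⟩ := intermediate_value_Icc hR hs_cont hx
    exact ⟨r, hr, hφx⟩

lemma continuous_weight (hp : IsConcaveGauge p p') (n : ℕ) :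
    Continuous fun r => p r ^ n * p' r :=
  (hp.continuous.pow n).mul hp.continuous_deriv

lemma weight_pos (hp : IsConcaveGauge p p') (n : ℕ) (hr : 0 < r) : 0 < p r ^ n * p' r :=
  mul_pos (pow_pos (hp.pos hr) n) (hp.deriv_pos r)

lemma energyDensity_comp_rescale_le (hp : IsConcaveGauge p p') (hc : c ∈ Ioc 0 1) {k : ℝ}
    (hk : 0 ≤ k) (hr : 0 < r) (x y : ℝ) :
    (y * rescaleDeriv p p' c r) ^ 2 + k * x ^ 2 / r ^ 2 ≤
      c ^ 2 * (y ^ 2 + k * x ^ 2 / rescale p c r ^ 2) := by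
  have hs_pos := hp.rescale_pos hc hr
  have hs_le := hp.rescale_le_mul hc hr.le
  have hs'_pos := hp.rescaleDeriv_pos hc.1 r
  have hs'_le := hp.rescaleDeriv_le hc hr.le
  rw [mul_add]
  refine add_le_add ?_ ?_
  · rw [mul_pow, mul_comm]
    gcongr
  · rw [← mul_div_assoc, div_le_div_iff₀ (by positivity) (by positivity)]
    calc k * x ^ 2 * rescale p c r ^ 2 ≤ k * x ^ 2 * (c * r) ^ 2 := by gcongr
      _ = c ^ 2 * (k * x ^ 2) * r ^ 2 := by ring

lemma radialEnergy_comp_rescale_le (hp : IsConcaveGauge p p') (hc : c ∈ Ioc 0 1) {R k : ℝ}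
    (hR : 0 ≤ R) (hk : 0 ≤ k) (n : ℕ) {φ φ' : ℝ → ℝ} (h : IsRadialTrial (rescale p c R) φ φ') :
    c ^ (n + 1) * radialEnergy k (fun r => p r ^ n * p' r) R (fun r => φ (rescale p c r))
        (fun r => φ' (rescale p c r) * rescaleDeriv p p' c r) ≤
      c ^ 2 * radialEnergy k (fun r => p r ^ n * p' r) (rescale p c R) φ φ' := by
  have hw := hp.continuous_weight n
  have hintegral := (hp.isRadialTrial_comp_rescale hc hR h).integrableOn_energy hw.continuousOn k
  have hintegral_comp := hp.integrableOn_rescale hc hR n (h.integrableOn_energy hw.continuousOn k)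
  rw [radialEnergy, radialEnergy,
    hp.integral_rescale hc hR n (fun r => φ' r ^ 2 + k * φ r ^ 2 / r ^ 2), mul_left_comm (c ^ 2),
    ← integral_const_mul (c ^ 2)]
  refine mul_le_mul_of_nonneg_left ?_ (pow_pos hc.1 _).le
  refine setIntegral_mono_on hintegral (hintegral_comp.const_mul _) measurableSet_Ioo fun r hr => ?_
  rw [← mul_assoc (c ^ 2)]
  exact mul_le_mul_of_nonneg_right (hp.energyDensity_comp_rescale_le hc hk hr.1 _ _)
    (hp.weight_pos n hr.1).le

lemma radialEigenvalue_le_rescale (hp : IsConcaveGauge p p') (hc : c ∈ Ioc 0 1) {R k : ℝ}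
    (hR : 0 < R) (hk : 0 ≤ k) (n : ℕ) :
    radialEigenvalue k (fun r => p r ^ n * p' r) R ≤
      c ^ 2 * radialEigenvalue k (fun r => p r ^ n * p' r) (rescale p c R) := by
  have hc0 : 0 < c := hc.1
  rw [← div_le_iff₀' (pow_pos hc0 2)]
  refine le_radialEigenvalue (hp.rescale_pos hc hR) fun φ φ' h => ?_
  have hψ := hp.isRadialTrial_comp_rescale hc hR.le h
  have hmass_pos := hψ.radialMass_pos hR (hp.continuous_weight n).continuousOn
    fun r hr => hp.weight_pos n hr.1
  have hmass : radialMass (fun r => p r ^ n * p' r) (rescale p c R) φ =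
      c ^ (n + 1) * radialMass (fun r => p r ^ n * p' r) R (fun r => φ (rescale p c r)) :=
    hp.integral_rescale hc hR.le n (fun r => φ r ^ 2)
  have hle := hψ.radialEigenvalue_le (fun r hr => (hp.weight_pos n hr.1).le) hk
  rw [le_div_iff₀ hmass_pos] at hle
  rw [div_le_iff₀' (pow_pos hc0 2), hmass, ← mul_div_assoc, le_div_iff₀ (by positivity),
    mul_left_comm]
  exact (mul_le_mul_of_nonneg_left hle (by positivity)).trans
    (hp.radialEnergy_comp_rescale_le hc hR.le hk n h)

theorem strictAntiOn_radialEigenvalue (hp : IsConcaveGauge p p') {k : ℝ} (hk : 0 < k) (n : ℕ) :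
    StrictAntiOn (radialEigenvalue k fun r => p r ^ n * p' r) (Ioi 0) := by
  intro a ha b hb hab
  have hc0 : 0 < p a / p b := div_pos (hp.pos ha) (hp.pos hb)
  have hc1 : p a / p b < 1 := (div_lt_one (hp.pos hb)).2 (hp.strictMono hab)
  have hpos : 0 < radialEigenvalue k (fun r => p r ^ n * p' r) a :=
    radialEigenvalue_pos ha (hp.continuous_weight n).continuousOn
      (fun r hr => hp.weight_pos n hr.1) hk
  have hle := hp.radialEigenvalue_le_rescale ⟨hc0, hc1.le⟩ hb hk.le n
  rw [hp.rescale_eq hb] at hle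
  exact hle.trans_lt (mul_lt_of_lt_one_left hpos (pow_lt_one₀ hc0.le hc1 two_ne_zero))

end IsConcaveGauge

section Gauge

variable {V : ℝ → ℝ}

/-- The mean of `e^{-V}` over the ball of radius `r` in dimension `n + 1`, written as an integral
over the unit interval so that it is continuous and positive also at `r = 0`. -/
def ballMean (V : ℝ → ℝ) (n : ℕ) (r : ℝ) : ℝ :=
  (n + 1) * ∫ u in (0 : ℝ)..1, exp (-V (r * u)) * u ^ n

/-- The radius of the Euclidean ball in dimension `n + 1` whose volume is the `e^{-V}`-mass of the
ball of radius `r`; the gauge presenting the weight `e^{-V} r^n`. -/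
def volumeRadius (V : ℝ → ℝ) (n : ℕ) (r : ℝ) : ℝ :=
  r * ballMean V n r ^ ((n + 1 : ℝ)⁻¹)

/-- The derivative of `volumeRadius V n`. -/
def volumeRadiusDeriv (V : ℝ → ℝ) (n : ℕ) (r : ℝ) : ℝ :=
  exp (-V r) * ballMean V n r ^ ((n + 1 : ℝ)⁻¹ - 1)

lemma pow_mul_ballMean (V : ℝ → ℝ) (n : ℕ) (r : ℝ) :
    r ^ (n + 1) * ballMean V n r = (n + 1) * ∫ t in (0 : ℝ)..r, exp (-V t) * t ^ n := by
  have hsub := intervalIntegral.mul_integral_comp_mul_left (f := fun t => exp (-V t) * t ^ n)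
    (a := 0) (b := 1) (c := r)
  simp only [mul_zero, mul_one] at hsub
  have hpow (u : ℝ) : exp (-V (r * u)) * (r * u) ^ n = r ^ n * (exp (-V (r * u)) * u ^ n) := by
    ring
  simp only [← hsub, hpow, intervalIntegral.integral_const_mul, ballMean]
  ring

lemma continuous_ballMean (hV : Continuous V) (n : ℕ) : Continuous (ballMean V n) :=
  continuous_const.mul <|
    intervalIntegral.continuous_parametric_intervalIntegral_of_continuous' (by fun_prop) _ _

lemma ballMean_pos (hV : Continuous V) (n : ℕ) (r : ℝ) : 0 < ballMean V n r := by
  refine mul_pos (by positivity) (intervalIntegral.integral_pos zero_lt_one (by fun_prop) ?_ ?_)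
  · intro u hu
    have := hu.1
    positivity
  · exact ⟨1, right_mem_Icc.2 zero_le_one, by positivity⟩

lemma antitoneOn_ballMean (hV : Continuous V) (hmono : MonotoneOn V (Ici 0)) (n : ℕ) :
    AntitoneOn (ballMean V n) (Ici 0) := by
  intro s (hs : 0 ≤ s) r (hr : 0 ≤ r) hsr
  refine mul_le_mul_of_nonneg_left (intervalIntegral.integral_mono_on zero_le_one
    (Continuous.intervalIntegrable (by fun_prop) _ _)
    (Continuous.intervalIntegrable (by fun_prop) _ _) fun u hu => ?_) (by positivity)
  have hu0 := hu.1
  have hVu : V (s * u) ≤ V (r * u) :=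
    hmono (mul_nonneg hs hu0) (mul_nonneg hr hu0) (by gcongr)
  gcongr

lemma comp_mul_sub_le_sub_of_convexOn_of_monotoneOn (hV : ConvexOn ℝ (Ici 0) V)
    (hmono : MonotoneOn V (Ici 0)) {s r u : ℝ} (hs : 0 ≤ s) (hsr : s ≤ r) (hu : u ∈ Icc 0 1) :
    V (r * u) - V (s * u) ≤ V r - V s := by
  obtain ⟨hu0, hu1⟩ := hu
  rcases hsr.eq_or_lt with rfl | hsr
  · simp
  rcases hu0.eq_or_lt with rfl | hu0
  · simpa using hmono hs (hs.trans hsr.le) hsr.le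
  have hr : 0 < r := hs.trans_lt hsr
  have hsu : s * u ≤ s := mul_le_of_le_one_right hs hu1
  have hru : r * u ≤ r := mul_le_of_le_one_right hr.le hu1
  have hsu_ru : s * u < r * u := mul_lt_mul_of_pos_right hsr hu0
  have hsu_mem : s * u ∈ Ici 0 := mul_nonneg hs hu0.le
  have hsecant_left : (V (r * u) - V (s * u)) / (r * u - s * u) ≤
      (V r - V (s * u)) / (r - s * u) :=
    hV.secant_mono hsu_mem (mul_pos hr hu0).le hr.le hsu_ru.ne' (hsu.trans_lt hsr).ne' hru
  have hsecant_right : (V (s * u) - V r) / (s * u - r) ≤ (V s - V r) / (s - r) :=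
    hV.secant_mono hr.le hsu_mem hs (hsu.trans_lt hsr).ne hsr.ne hsu
  rw [← neg_div_neg_eq, neg_sub, neg_sub, ← neg_div_neg_eq (V s - V r), neg_sub, neg_sub]
    at hsecant_right
  have hslope := hsecant_left.trans hsecant_right
  rw [div_le_div_iff₀ (sub_pos.2 hsu_ru) (sub_pos.2 hsr), ← sub_mul, ← mul_assoc,
    mul_right_comm] at hslope
  exact (le_of_mul_le_mul_right hslope (sub_pos.2 hsr)).trans
    (mul_le_of_le_one_right (sub_nonneg.2 (hmono hs hr.le hsr.le)) hu1)

lemma antitoneOn_exp_div_ballMean (hVc : Continuous V) (hV : ConvexOn ℝ (Ici 0) V)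
    (hmono : MonotoneOn V (Ici 0)) (n : ℕ) :
    AntitoneOn (fun r => exp (-V r) / ballMean V n r) (Ici 0) := by
  intro s (hs : 0 ≤ s) r _ hsr
  have hintegral : exp (-V r) * ∫ u in (0 : ℝ)..1, exp (-V (s * u)) * u ^ n ≤
      exp (-V s) * ∫ u in (0 : ℝ)..1, exp (-V (r * u)) * u ^ n := by
    simp only [← intervalIntegral.integral_const_mul]
    refine intervalIntegral.integral_mono_on zero_le_one
      (Continuous.intervalIntegrable (by fun_prop) _ _)
      (Continuous.intervalIntegrable (by fun_prop) _ _) fun u hu => ?_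
    have hu0 := hu.1
    have hincr := comp_mul_sub_le_sub_of_convexOn_of_monotoneOn hV hmono hs hsr hu
    simp only [← mul_assoc, ← exp_add]
    gcongr ?_ * _
    exact exp_le_exp.2 (by linarith)
  dsimp only
  rw [div_le_div_iff₀ (ballMean_pos hVc n r) (ballMean_pos hVc n s), ballMean, ballMean,
    mul_left_comm, mul_left_comm (exp (-V s))]
  exact mul_le_mul_of_nonneg_left hintegral (by positivity)

lemma hasDerivAt_ballMean (hV : Continuous V) (n : ℕ) {r : ℝ} (hr : r ≠ 0) :
    HasDerivAt (ballMean V n) ((n + 1) * (exp (-V r) - ballMean V n r) / r) r := by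
  have hintegral : HasDerivAt (fun r => (n + 1) * ∫ t in (0 : ℝ)..r, exp (-V t) * t ^ n)
      ((n + 1) * (exp (-V r) * r ^ n)) r :=
    (Continuous.integral_hasStrictDerivAt (by fun_prop) 0 r).hasDerivAt.const_mul _
  have hquot := hintegral.div (hasDerivAt_pow (n + 1) r) (pow_ne_zero _ hr)
  have heq : ballMean V n =ᶠ[nhds r]
      fun r => ((n + 1) * ∫ t in (0 : ℝ)..r, exp (-V t) * t ^ n) / r ^ (n + 1) := by
    filter_upwards [isOpen_ne.mem_nhds hr] with x hx
    rw [← pow_mul_ballMean, mul_div_cancel_left₀ _ (pow_ne_zero _ hx)]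
  refine (hquot.congr_of_eventuallyEq heq).congr_deriv ?_
  rw [← pow_mul_ballMean]
  push_cast
  field_simp
  ring

lemma continuous_volumeRadiusDeriv (hV : Continuous V) (n : ℕ) :
    Continuous (volumeRadiusDeriv V n) :=
  (by fun_prop : Continuous fun r => exp (-V r)).mul <|
    (continuous_ballMean hV n).rpow_const fun r => Or.inl (ballMean_pos hV n r).ne'

lemma continuous_volumeRadius (hV : Continuous V) (n : ℕ) : Continuous (volumeRadius V n) :=
  continuous_id.mul <|
    (continuous_ballMean hV n).rpow_const fun r => Or.inl (ballMean_pos hV n r).ne'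

lemma hasDerivAt_volumeRadius (hV : Continuous V) (n : ℕ) (r : ℝ) :
    HasDerivAt (volumeRadius V n) (volumeRadiusDeriv V n r) r := by
  refine hasDerivAt_of_hasDerivAt_of_ne' (x := 0) (fun r hr => ?_)
    (continuous_volumeRadius hV n).continuousAt (continuous_volumeRadiusDeriv hV n).continuousAt r
  have hM := ballMean_pos hV n r
  have hroot := (hasDerivAt_ballMean hV n hr).rpow_const (p := (n + 1 : ℝ)⁻¹) (Or.inl hM.ne')
  refine ((hasDerivAt_id r).mul hroot).congr_deriv ?_
  rw [volumeRadiusDeriv, rpow_sub_one hM.ne']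
  simp only [id]
  field_simp
  ring

lemma volumeRadius_pow_mul_deriv (hV : Continuous V) (n : ℕ) (r : ℝ) :
    volumeRadius V n r ^ n * volumeRadiusDeriv V n r = exp (-V r) * r ^ n := by
  have hM := ballMean_pos hV n r
  have hexp : (n + 1 : ℝ)⁻¹ * n + ((n + 1 : ℝ)⁻¹ - 1) = 0 := by
    field_simp
    ring
  calc volumeRadius V n r ^ n * volumeRadiusDeriv V n r
      = exp (-V r) * r ^ n *
          ((ballMean V n r ^ (n + 1 : ℝ)⁻¹) ^ n * ballMean V n r ^ ((n + 1 : ℝ)⁻¹ - 1)) := by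
        rw [volumeRadius, volumeRadiusDeriv]
        ring
    _ = exp (-V r) * r ^ n := by
        rw [← rpow_mul_natCast hM.le, ← rpow_add hM, hexp, rpow_zero, mul_one]

lemma antitoneOn_volumeRadiusDeriv (hVc : Continuous V) (hV : ConvexOn ℝ (Ici 0) V)
    (hmono : MonotoneOn V (Ici 0)) (n : ℕ) : AntitoneOn (volumeRadiusDeriv V n) (Ici 0) := by
  have hfactor (r : ℝ) : volumeRadiusDeriv V n r =
      exp (-V r) / ballMean V n r * ballMean V n r ^ (n + 1 : ℝ)⁻¹ := by
    rw [volumeRadiusDeriv, rpow_sub_one (ballMean_pos hVc n r).ne']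
    ring
  intro s hs r hr hsr
  have hMs := ballMean_pos hVc n s
  have hMr := ballMean_pos hVc n r
  rw [hfactor, hfactor]
  exact mul_le_mul (antitoneOn_exp_div_ballMean hVc hV hmono n hs hr hsr)
    (rpow_le_rpow hMr.le (antitoneOn_ballMean hVc hmono n hs hr hsr) (by positivity))
    (by positivity) (by positivity)

theorem isConcaveGauge_volumeRadius (hVc : Continuous V) (hV : ConvexOn ℝ (Ici 0) V)
    (hmono : MonotoneOn V (Ici 0)) (n : ℕ) :
    IsConcaveGauge (volumeRadius V n) (volumeRadiusDeriv V n) where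
  hasDerivAt := hasDerivAt_volumeRadius hVc n
  continuous_deriv := continuous_volumeRadiusDeriv hVc n
  deriv_pos r := mul_pos (exp_pos _) (rpow_pos_of_pos (ballMean_pos hVc n r) _)
  antitoneOn_deriv := antitoneOn_volumeRadiusDeriv hVc hV hmono n
  map_zero := zero_mul _

end Gauge

lemma convexOn_comp_abs {V : ℝ → ℝ} (hV : ConvexOn ℝ (Ici 0) V) (hmono : MonotoneOn V (Ici 0)) :
    ConvexOn ℝ univ fun r => V |r| := by
  have hsub : norm '' (univ : Set ℝ) ⊆ Ici 0 := by
    rintro _ ⟨r, -, rfl⟩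
    exact norm_nonneg r
  have hconvex : Convex ℝ (norm '' (univ : Set ℝ)) :=
    (isPreconnected_univ.image _ continuous_norm.continuousOn).ordConnected.convex
  exact (hV.subset hsub hconvex).comp convexOn_univ_norm (hmono.mono hsub)

theorem mu1Ball_strictAnti_general {V : ℝ → ℝ} (hV : ConvexOn ℝ (Ici 0) V)
    (hmono : MonotoneOn V (Ici 0)) (n : ℕ) {k : ℝ} (hk : 0 < k) :
    StrictAntiOn (radialEigenvalue k fun r => exp (-V r) * r ^ n) (Ioi 0) := by
  -- `V` is arbitrary on `(-∞, 0)`; its even extension is convex on `ℝ`, hence continuous.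
  have hconvex := convexOn_comp_abs hV hmono
  have hcont : Continuous fun r => V |r| :=
    continuousOn_univ.1 (hconvex.continuousOn isOpen_univ)
  have hmono' : MonotoneOn (fun r => V |r|) (Ici 0) :=
    hmono.congr fun r hr => by simp only [abs_of_nonneg (mem_Ici.1 hr)]
  have hanti := (isConcaveGauge_volumeRadius hcont
    (hconvex.subset (subset_univ _) (convex_Ici 0)) hmono' n).strictAntiOn_radialEigenvalue hk n
  simp only [volumeRadius_pow_mul_deriv hcont] at hanti
  exact hanti.congr fun R _ => radialEigenvalue_congr fun r hr => by
    simp only [abs_of_pos hr.1]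

lemma mu1Ball_eq_radialEigenvalue (m : ℕ) (R : ℝ) :
    mu1Ball m R =
      radialEigenvalue ((m : ℝ) - 1) (fun r => exp (-(r ^ 2 / 2)) * r ^ (m - 1)) R := by
  simp only [mu1Ball, radialEigenvalue, radialEnergy, radialMass, mul_assoc, neg_div]

lemma convexOn_sq_div_two : ConvexOn ℝ (Ici 0) fun r : ℝ => r ^ 2 / 2 := by
  simpa only [smul_eq_mul, div_eq_inv_mul] using
    (convexOn_pow 2).smul (c := (2 : ℝ)⁻¹) (by positivity)

lemma monotoneOn_sq_div_two : MonotoneOn (fun r : ℝ => r ^ 2 / 2) (Ici 0) := by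
  intro s (hs : 0 ≤ s) r _ hsr
  dsimp only
  gcongr

/-- **Lemma 2.1.** For `m ≥ 2`, the first nonzero Neumann eigenvalue
`μ₁(B_R)` is strictly decreasing in the radius `R`: for `0 < a < b`, one has
`μ₁(B_b) < μ₁(B_a)`. -/
theorem mu1Ball_strictAnti (m : ℕ) (hm : 2 ≤ m) :
    ∀ a b : ℝ, 0 < a → a < b → mu1Ball m b < mu1Ball m a := by
  intro a b ha hab
  have hk : (0 : ℝ) < m - 1 := sub_pos.2 (Nat.one_lt_cast.2 hm)
  rw [mu1Ball_eq_radialEigenvalue, mu1Ball_eq_radialEigenvalue]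
  exact mu1Ball_strictAnti_general convexOn_sq_div_two monotoneOn_sq_div_two (m - 1) hk
    ha (ha.trans hab) hab
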